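/- arXiv:1111.1200 — 4 statements merged into one kernel-verified Lean document; each statement's English description precedes it below -/
import Mathlib

section
/- Let G and H be finite simple graphs on m and n vertices respectively. Then, as an identity in the field ℂ(λ) of rational functions, the characteristic polynomial of the corona satisfies f_{G∘H}(λ) = f_H(λ)^m · f_G(λ − χ_H(λ)), where f_G(λ − χ_H(λ)) denotes the polynomial f_G evaluated at the rational function λ − χ_H(λ). -/
open Matrix Polynomial

/-- The characteristic matrix `λ I - B` of `B`, over the field `ℂ(λ)` of rational functions. -/
noncomputable def charMatRatFunc {V : Type*} [Fintype V] [DecidableEq V]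
    (B : Matrix V V ℂ) : Matrix V V (RatFunc ℂ) :=
  Matrix.scalar V (RatFunc.X : RatFunc ℂ) - B.map (algebraMap ℂ (RatFunc ℂ))

/-- The coronal of a matrix `B`: the sum of the entries of `(λ I - B)⁻¹` over `ℂ(λ)`. -/
noncomputable def coronal {V : Type*} [Fintype V] [DecidableEq V]
    (B : Matrix V V ℂ) : RatFunc ℂ :=
  ∑ i, ∑ j, (charMatRatFunc B)⁻¹ i j

/-- The adjacency matrix of the corona `G ∘ H`. -/
def coronaMatrix {α β : Type*} (A : Matrix α α ℂ) (B : Matrix β β ℂ)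
    [DecidableEq α] :
    Matrix (α ⊕ β × α) (α ⊕ β × α) ℂ :=
  Matrix.fromBlocks A
    (Matrix.of fun i p => if i = p.2 then 1 else 0)
    (Matrix.of fun p j => if p.2 = j then 1 else 0)
    (Matrix.of fun p q => if p.2 = q.2 then B p.1 q.1 else 0)

/-!
Over `ℂ(λ)` the characteristic matrix of the corona is a `2 × 2` block matrix whose lower right
block `(λI - B) ⊗ I_m` is invertible with determinant `f_H(λ)^m`. Its Schur complement is
`λI - A - (1ᵀ ⊗ I_m) ((λI - B)⁻¹ ⊗ I_m) (1 ⊗ I_m)`, in which the last term collapses to the scalar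
matrix `χ_H(λ) I_m`.
-/

open scoped Kronecker

section CopyIncidence

variable {R S α β γ : Type*} [DecidableEq α]

variable (R α β) in
/-- The block `1_nᵀ ⊗ I_m` of the corona, recording which vertex of `G` each vertex of the copies
of `H` is joined to: column `(b, a)` is the vertex `b` of the copy attached to `a`. It is given
entrywise, so that its rows are indexed by `α` rather than by the `Unit × α` of a Kronecker
product. -/
def copyIncidence [Zero R] [One R] : Matrix α (β × α) R :=
  of fun i p => if i = p.2 then 1 else 0

lemma copyIncidence_apply [Zero R] [One R] (i : α) (p : β × α) :
    copyIncidence R α β i p = if i = p.2 then 1 else 0 :=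
  rfl

lemma copyIncidence_map [NonAssocSemiring R] [NonAssocSemiring S] (f : R →+* S) :
    (copyIncidence R α β).map f = copyIncidence S α β := by
  ext i p
  simp [copyIncidence_apply, apply_ite f]

lemma coronaMatrix_eq_fromBlocks (A : Matrix α α ℂ) (B : Matrix β β ℂ) :
    coronaMatrix A B = fromBlocks A (copyIncidence ℂ α β) (copyIncidence ℂ α β)ᵀ
      (B ⊗ₖ (1 : Matrix α α ℂ)) := by
  ext (i | p) (j | q) <;> simp [coronaMatrix, copyIncidence_apply, one_apply, eq_comm]

variable [Fintype α] [Fintype β]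

lemma copyIncidence_mul_kronecker_one_apply [NonAssocSemiring R] (N : Matrix β γ R)
    (i : α) (p : γ × α) :
    (copyIncidence R α β * (N ⊗ₖ (1 : Matrix α α R))) i p =
      if i = p.2 then ∑ b, N b p.1 else 0 := by
  simp [Matrix.mul_apply, copyIncidence_apply, Fintype.sum_prod_type, one_apply,
    Finset.sum_ite_irrel]

lemma copyIncidence_mul_kronecker_one_mul_transpose [Fintype γ] [Semiring R]
    (N : Matrix β γ R) :
    copyIncidence R α β * (N ⊗ₖ (1 : Matrix α α R)) * (copyIncidence R α γ)ᵀ =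
      scalar α (∑ b, ∑ c, N b c) := by
  ext i j
  calc (copyIncidence R α β * (N ⊗ₖ (1 : Matrix α α R)) * (copyIncidence R α γ)ᵀ) i j
      = if i = j then ∑ c, ∑ b, N b c else 0 := by
        rw [Matrix.mul_apply]
        simp_rw [copyIncidence_mul_kronecker_one_apply]
        simp [copyIncidence_apply, Fintype.sum_prod_type]
    _ = scalar α (∑ b, ∑ c, N b c) i j := by
        rw [Finset.sum_comm, scalar_apply, diagonal_apply]

lemma det_fromBlocks_neg_copyIncidence [DecidableEq β] [CommRing R]
    (M : Matrix α α R) (N : Matrix β β R) (hN : IsUnit N.det) :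
    (fromBlocks M (-copyIncidence R α β) (-(copyIncidence R α β)ᵀ)
        (N ⊗ₖ (1 : Matrix α α R))).det =
      N.det ^ Fintype.card α * (M - scalar α (∑ i, ∑ j, N⁻¹ i j)).det := by
  have det_kronecker_one : (N ⊗ₖ (1 : Matrix α α R)).det = N.det ^ Fintype.card α := by
    rw [det_kronecker, det_one, one_pow, mul_one]
  have isUnit_det : IsUnit (N ⊗ₖ (1 : Matrix α α R)).det :=
    det_kronecker_one ▸ hN.pow _
  let := invertibleOfIsUnitDet _ isUnit_det
  rw [det_fromBlocks₂₂, det_kronecker_one, invOf_eq_nonsing_inv, inv_kronecker, inv_one,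
    Matrix.neg_mul, Matrix.neg_mul, Matrix.mul_neg, neg_neg,
    copyIncidence_mul_kronecker_one_mul_transpose]

end CopyIncidence

section Charmatrix

variable {R S α β : Type*} [CommRing R] [Fintype α] [DecidableEq α] [Fintype β] [DecidableEq β]

lemma aeval_charpoly_eq_det [CommRing S] [Algebra R S] (M : Matrix α α R) (t : S) :
    aeval t M.charpoly = (scalar α t - M.map (algebraMap R S)).det := by
  rw [← eval_charpoly, charpoly_map, eval_map_algebraMap]

lemma charmatrix_kronecker_one (M : Matrix β β R) :
    (M ⊗ₖ (1 : Matrix α α R)).charmatrix = M.charmatrix ⊗ₖ (1 : Matrix α α R[X]) := by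
  ext ⟨i, k⟩ ⟨j, l⟩
  by_cases hij : i = j <;> by_cases hkl : k = l <;> simp [hij, hkl]

lemma charMatRatFunc_eq_charmatrix_map (M : Matrix α α ℂ) :
    charMatRatFunc M = M.charmatrix.map (algebraMap ℂ[X] (RatFunc ℂ)) := by
  ext i j
  by_cases h : i = j <;> simp [charMatRatFunc, h]

lemma det_charMatRatFunc (M : Matrix α α ℂ) :
    (charMatRatFunc M).det = algebraMap ℂ[X] (RatFunc ℂ) M.charpoly := by
  rw [charMatRatFunc_eq_charmatrix_map, charpoly, RingHom.map_det, RingHom.mapMatrix_apply]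

lemma isUnit_det_charMatRatFunc (M : Matrix α α ℂ) : IsUnit (charMatRatFunc M).det := by
  rw [det_charMatRatFunc]
  exact (RatFunc.algebraMap_ne_zero M.charpoly_monic.ne_zero).isUnit

lemma det_charMatRatFunc_sub_scalar (M : Matrix α α ℂ) (t : RatFunc ℂ) :
    (charMatRatFunc M - scalar α t).det = aeval (RatFunc.X - t) M.charpoly := by
  rw [aeval_charpoly_eq_det, charMatRatFunc, map_sub, sub_right_comm]

lemma charMatRatFunc_fromBlocks (A : Matrix α α ℂ) (B : Matrix α β ℂ) (C : Matrix β α ℂ)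
    (D : Matrix β β ℂ) :
    charMatRatFunc (fromBlocks A B C D) =
      fromBlocks (charMatRatFunc A) (-B.map (algebraMap ℂ (RatFunc ℂ)))
        (-C.map (algebraMap ℂ (RatFunc ℂ))) (charMatRatFunc D) := by
  simp only [charMatRatFunc_eq_charmatrix_map, charmatrix_fromBlocks, fromBlocks_map]
  congr 1 <;> ext <;> simp

lemma charMatRatFunc_kronecker_one (M : Matrix β β ℂ) :
    charMatRatFunc (M ⊗ₖ (1 : Matrix α α ℂ)) =
      charMatRatFunc M ⊗ₖ (1 : Matrix α α (RatFunc ℂ)) := by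
  simp only [charMatRatFunc_eq_charmatrix_map, charmatrix_kronecker_one]
  ext p q
  by_cases h : p.2 = q.2 <;> simp [one_apply, h]

lemma charMatRatFunc_coronaMatrix (A : Matrix α α ℂ) (B : Matrix β β ℂ) :
    charMatRatFunc (coronaMatrix A B) =
      fromBlocks (charMatRatFunc A) (-copyIncidence (RatFunc ℂ) α β)
        (-(copyIncidence (RatFunc ℂ) α β)ᵀ)
        (charMatRatFunc B ⊗ₖ (1 : Matrix α α (RatFunc ℂ))) := by
  rw [coronaMatrix_eq_fromBlocks, charMatRatFunc_fromBlocks, charMatRatFunc_kronecker_one,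
    transpose_map, copyIncidence_map]

end Charmatrix

theorem corona_charpoly_general {α β : Type*} [Fintype α] [DecidableEq α] [Fintype β]
    [DecidableEq β] (A : Matrix α α ℂ) (B : Matrix β β ℂ) :
    algebraMap ℂ[X] (RatFunc ℂ) (coronaMatrix A B).charpoly =
      algebraMap ℂ[X] (RatFunc ℂ) B.charpoly ^ Fintype.card α *
        aeval (RatFunc.X - coronal B) A.charpoly := by
  rw [← det_charMatRatFunc, charMatRatFunc_coronaMatrix,
    det_fromBlocks_neg_copyIncidence _ _ (isUnit_det_charMatRatFunc B), ← coronal,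
    det_charMatRatFunc, det_charMatRatFunc_sub_scalar]

/-- **Spectra of coronae** (McLeman–McNicholas, Theorem 1).
For finite simple graphs `G` on `m` vertices and `H` on `n` vertices, as an identity in the
field `ℂ(λ)`, the characteristic polynomial of the corona satisfies
`f_{G∘H}(λ) = f_H(λ)^m ⬝ f_G(λ - χ_H(λ))`. -/
theorem corona_charpoly {m n : ℕ} (G : SimpleGraph (Fin m)) (H : SimpleGraph (Fin n))
    [DecidableRel G.Adj] [DecidableRel H.Adj] :
    algebraMap (Polynomial ℂ) (RatFunc ℂ)
        (coronaMatrix (G.adjMatrix ℂ) (H.adjMatrix ℂ)).charpoly =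
      (algebraMap (Polynomial ℂ) (RatFunc ℂ) (H.adjMatrix ℂ).charpoly) ^ m *
        Polynomial.aeval (RatFunc.X - coronal (H.adjMatrix ℂ)) (G.adjMatrix ℂ).charpoly := by
  simpa only [Fintype.card_fin] using
    corona_charpoly_general (G.adjMatrix ℂ) (H.adjMatrix ℂ)
end

section
/- Let G and H be finite simple graphs on m and n vertices with adjacency matrices A and B, and let λ₀ ∈ ℂ satisfy f_H(λ₀) ≠ 0. If λ₀ − 1_nᵀ(λ₀I_n − B)⁻¹1_n is an eigenvalue of G (equivalently, a root of f_G), then λ₀ is an eigenvalue of the corona G∘H, i.e., f_{G∘H}(λ₀) = 0. -/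
open Matrix Polynomial

/-!
Write `λI - (A ∘ B)` in block form with lower right block `(λI - B) ⊗ I`, which is invertible at
`λ₀`. Sandwiching its inverse `(λ₀I - B)⁻¹ ⊗ I` between `1ᵀ ⊗ I` and `1 ⊗ I` gives the scalar matrix
`c I` with `c = 1ᵀ(λ₀I - B)⁻¹1`, so the Schur complement is `(λ₀ - c)I - A` and
`f_{A ∘ B}(λ₀) = f_B(λ₀) ^ m * f_A(λ₀ - c)`.
-/

open scoped Kronecker

section vecKroneckerOne

variable {β γ R : Type*}

/-- The matrix `v ⊗ I` for a column vector `v`, with columns indexed by `α` rather than by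
`Unit × α`, so that it can serve as an off-diagonal block of a matrix indexed by `α ⊕ β × α`. -/
def vecKroneckerOne (α : Type*) [DecidableEq α] [Zero R] (v : β → R) : Matrix (β × α) α R :=
  of fun p j => if p.2 = j then v p.1 else 0

variable {α : Type*} [DecidableEq α] [Fintype α] [Fintype β]

theorem kronecker_one_mul_vecKroneckerOne [NonAssocSemiring R] (M : Matrix γ β R) (v : β → R) :
    M ⊗ₖ (1 : Matrix α α R) * vecKroneckerOne α v = vecKroneckerOne α (M *ᵥ v) := by
  ext ⟨k, i⟩ j
  simp [vecKroneckerOne, mul_apply, Fintype.sum_prod_type, mulVec, dotProduct, one_apply]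

theorem transpose_vecKroneckerOne_mul_vecKroneckerOne [Semiring R] (u v : β → R) :
    (vecKroneckerOne α u)ᵀ * vecKroneckerOne α v = scalar α (u ⬝ᵥ v) := by
  ext i j
  obtain rfl | hij := eq_or_ne i j
  · simp [vecKroneckerOne, mul_apply, Fintype.sum_prod_type, dotProduct, -map_sum]
  · simp [vecKroneckerOne, mul_apply, Fintype.sum_prod_type, hij, hij.symm]

theorem det_fromBlocks_vecKroneckerOne [DecidableEq β] [CommRing R] (A : Matrix α α R)
    {D : Matrix β β R} (hD : IsUnit D.det) (u v : β → R) :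
    (fromBlocks A (vecKroneckerOne α u)ᵀ (vecKroneckerOne α v) (D ⊗ₖ 1)).det =
      D.det ^ Fintype.card α * (A - scalar α (u ⬝ᵥ D⁻¹ *ᵥ v)).det := by
  have det_kron : (D ⊗ₖ (1 : Matrix α α R)).det = D.det ^ Fintype.card α := by
    rw [det_kronecker, det_one, one_pow, mul_one]
  let : Invertible (D ⊗ₖ (1 : Matrix α α R)) :=
    invertibleOfIsUnitDet _ (det_kron ▸ hD.pow _)
  rw [det_fromBlocks₂₂, det_kron, invOf_eq_nonsing_inv, inv_kronecker, inv_one, Matrix.mul_assoc,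
    kronecker_one_mul_vecKroneckerOne, transpose_vecKroneckerOne_mul_vecKroneckerOne]

end vecKroneckerOne

section corona

variable {α β : Type*} [DecidableEq α] [DecidableEq β] [Fintype α] [Fintype β]

theorem scalar_sub_coronaMatrix (A : Matrix α α ℂ) (B : Matrix β β ℂ) (x : ℂ) :
    scalar (α ⊕ β × α) x - coronaMatrix A B =
      fromBlocks (scalar α x - A) (vecKroneckerOne α (-1))ᵀ (vecKroneckerOne α (-1))
        ((scalar β x - B) ⊗ₖ 1) := by
  ext (i | ⟨k, i⟩) (j | ⟨l, j⟩) <;> by_cases hij : i = j <;>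
    simp [coronaMatrix, vecKroneckerOne, diagonal_apply, hij, eq_comm (a := j)]

theorem eval_charpoly_coronaMatrix (A : Matrix α α ℂ) {B : Matrix β β ℂ} {x : ℂ}
    (hB : B.charpoly.eval x ≠ 0) :
    (coronaMatrix A B).charpoly.eval x =
      B.charpoly.eval x ^ Fintype.card α *
        A.charpoly.eval (x - ∑ i, ∑ j, (scalar β x - B)⁻¹ i j) := by
  have sum_entries : (-1 : β → ℂ) ⬝ᵥ (scalar β x - B)⁻¹ *ᵥ (-1) =
      ∑ i, ∑ j, (scalar β x - B)⁻¹ i j := by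
    simp [mulVec, dotProduct]
  rw [eval_charpoly] at hB
  simp only [eval_charpoly]
  rw [scalar_sub_coronaMatrix, det_fromBlocks_vecKroneckerOne _ hB.isUnit, sum_entries, map_sub,
    sub_right_comm]

theorem corona_new_eigenvalues_general (A : Matrix α α ℂ) {B : Matrix β β ℂ} {x : ℂ}
    (hB : B.charpoly.eval x ≠ 0) :
    (coronaMatrix A B).charpoly.eval x = 0 ↔
      A.charpoly.eval (x - ∑ i, ∑ j, (scalar β x - B)⁻¹ i j) = 0 := by
  rw [eval_charpoly_coronaMatrix A hB, mul_eq_zero_iff_left (pow_ne_zero _ hB)]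

end corona

/-- If `f_H(λ₀) ≠ 0` and `λ₀ - 1ₙᵀ(λ₀ I - B)⁻¹ 1ₙ` is an eigenvalue of `G`, then `λ₀` is an
eigenvalue of the corona `G ∘ H`. -/
theorem corona_new_eigenvalues {m n : ℕ} (G : SimpleGraph (Fin m)) (H : SimpleGraph (Fin n))
    [DecidableRel G.Adj] [DecidableRel H.Adj] (lam0 : ℂ)
    (hH : (H.adjMatrix ℂ).charpoly.eval lam0 ≠ 0)
    (hG : (G.adjMatrix ℂ).charpoly.eval
        (lam0 - ∑ i, ∑ j, ((Matrix.scalar (Fin n) lam0 - H.adjMatrix ℂ)⁻¹) i j) = 0) :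
    (coronaMatrix (G.adjMatrix ℂ) (H.adjMatrix ℂ)).charpoly.eval lam0 = 0 :=
  (corona_new_eigenvalues_general _ hH).mpr hG
end

section
/- Let B be the adjacency matrix of the path graph P_n (vertices 1,…,n in path order), and let f_j := f_{P_j}(λ) denote the characteristic polynomial of the path graph on j vertices with f_0 = 1. Then for all 1 ≤ i ≤ j ≤ n, the (i,j) entry of the adjugate matrix of λI − B (over ℂ[λ]) equals f_{i−1}·f_{n−j}. -/
open Matrix Polynomial

/-- The adjacency matrix of the path graph `Pₙ`: vertices `1, …, n` with `i` adjacent to `j`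
exactly when `|i - j| = 1`. -/
def pathMatrix (n : ℕ) : Matrix (Fin n) (Fin n) ℂ :=
  Matrix.of fun i j => if (i : ℕ) + 1 = (j : ℕ) ∨ (j : ℕ) + 1 = (i : ℕ) then 1 else 0

/-!
Let `Sₖ` be the rescaled Chebyshev polynomials, indexed by `k ∈ ℤ`, with `S₋₁ = 0`, `S₀ = 1` and
`Sₖ₊₁ = λ Sₖ - Sₖ₋₁`. The kernel `g(a, b) = S_{min a b} S_{n-1-max a b}` satisfies
`λ g(a, b) - g(a - 1, b) - g(a + 1, b) = Sₙ δ_{ab}` on all of `ℤ`: off the diagonal this is the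
recurrence, on the diagonal it is the addition formula. Since `g` vanishes at `a = -1` and `a = n`,
its restriction `G` to the path satisfies `(λI - B) G = Sₙ I`, hence
`Sₙ adj(λI - B) = det(λI - B) G`. The corner entry of `G` is `1`, so `Sₙ` divides `det(λI - B)`;
both are monic of degree `n`, so they agree, and cancelling them gives `adj(λI - B) = G`.
-/

open SimpleGraph

section Chebyshev

variable (R : Type*) [CommRing R]

theorem chebyshev_S_add (a b : ℤ) :
    Chebyshev.S R (a + b) =
      Chebyshev.S R a * Chebyshev.S R b - Chebyshev.S R (a - 1) * Chebyshev.S R (b - 1) := by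
  have exchange (a b : ℤ) :
      Chebyshev.S R a * Chebyshev.S R (b + 1) - Chebyshev.S R (a - 1) * Chebyshev.S R b =
        Chebyshev.S R (a + 1) * Chebyshev.S R b - Chebyshev.S R a * Chebyshev.S R (b - 1) := by
    rw [Chebyshev.S_add_one, Chebyshev.S_add_one]
    ring
  induction b generalizing a with
  | zero => simp
  | succ b ih =>
    rw [add_sub_cancel_right, exchange, add_comm (b : ℤ) 1, ← add_assoc, ih, add_sub_cancel_right]
  | pred b ih =>
    have h_exchange := exchange (a - 1) (-b - 1)
    rw [sub_add_cancel, sub_add_cancel] at h_exchange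
    rw [← h_exchange, ← ih, sub_add_eq_add_sub, add_sub_assoc]

theorem degree_chebyshev_S [Nontrivial R] (n : ℕ) : (Chebyshev.S R n).degree = n := by
  induction n using Nat.twoStepInduction with
  | zero => simp
  | one => simp
  | more n ih₀ ih₁ =>
    have h_lead : (X * Chebyshev.S R (n + 1 : ℕ)).degree = ((n + 2 : ℕ) : WithBot ℕ) := by
      rw [X_mul, degree_mul_X, ih₁]; norm_cast
    have h_lt : (Chebyshev.S R n).degree < (X * Chebyshev.S R (n + 1 : ℕ)).degree := by
      rw [h_lead, ih₀]; norm_cast; omega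
    push_cast at h_lt h_lead ⊢
    rw [Chebyshev.S_add_two, degree_sub_eq_left_of_degree_lt h_lt, h_lead]

theorem monic_chebyshev_S (n : ℕ) : (Chebyshev.S R n).Monic := by
  nontriviality R
  induction n using Nat.twoStepInduction with
  | zero => simp
  | one => simp
  | more n _ ih₁ =>
    have h_lt : (Chebyshev.S R n).degree < (X * Chebyshev.S R (n + 1 : ℕ)).degree := by
      rw [X_mul, degree_mul_X, degree_chebyshev_S, degree_chebyshev_S]; norm_cast; omega
    push_cast at h_lt ih₁ ⊢
    rw [Chebyshev.S_add_two]
    exact (monic_X.mul ih₁).sub_of_left h_lt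

/-- The Green kernel of `λ - Δ` on the path `0, …, n - 1`, up to the factor `Sₙ`, where
`(Δ h)(a) = h (a - 1) + h (a + 1)`. Its arguments range over `ℤ`, so that the ends of the path need
no separate treatment: there the kernel vanishes because `S₋₁ = 0`. -/
noncomputable def pathGreen (n a b : ℤ) : R[X] :=
  Chebyshev.S R (min a b) * Chebyshev.S R (n - 1 - max a b)

theorem pathGreen_of_le {n a b : ℤ} (hab : a ≤ b) :
    pathGreen R n a b = Chebyshev.S R a * Chebyshev.S R (n - 1 - b) := by
  rw [pathGreen, min_eq_left hab, max_eq_right hab]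

theorem pathGreen_of_ge {n a b : ℤ} (hba : b ≤ a) :
    pathGreen R n a b = Chebyshev.S R b * Chebyshev.S R (n - 1 - a) := by
  rw [pathGreen, min_eq_right hba, max_eq_left hba]

theorem pathGreen_neg_one_left {n b : ℤ} (hb : -1 ≤ b) : pathGreen R n (-1) b = 0 := by
  simp [pathGreen_of_le R hb]

theorem pathGreen_self_left {n b : ℤ} (hb : b ≤ n) : pathGreen R n n b = 0 := by
  simp [pathGreen_of_ge R hb]

theorem X_mul_pathGreen_sub_neighbors (n a b : ℤ) :
    X * pathGreen R n a b - (pathGreen R n (a - 1) b + pathGreen R n (a + 1) b) =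
      if a = b then Chebyshev.S R n else 0 := by
  rcases lt_trichotomy a b with hlt | rfl | hgt
  · rw [if_neg hlt.ne, pathGreen_of_le R hlt.le, pathGreen_of_le R (by omega),
      pathGreen_of_le R (by omega), Chebyshev.S_add_one]
    ring
  · have h_add := chebyshev_S_add R (a + 1) (n - 1 - a)
    rw [show a + 1 + (n - 1 - a) = n by ring, add_sub_cancel_right, Chebyshev.S_add_one] at h_add
    rw [if_pos rfl, pathGreen_of_le R le_rfl, pathGreen_of_le R (by omega),
      pathGreen_of_ge R (by omega), h_add, ← sub_sub (n - 1)]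
    ring
  · rw [if_neg hgt.ne', pathGreen_of_ge R hgt.le, pathGreen_of_ge R (by omega),
      pathGreen_of_ge R (by omega), sub_sub_eq_add_sub, add_sub_right_comm, Chebyshev.S_add_one,
      ← sub_sub (n - 1)]
    ring

end Chebyshev

section PathGraph

instance pathGraphDecidableAdj (n : ℕ) : DecidableRel (pathGraph n).Adj :=
  fun _ _ => decidable_of_iff' _ pathGraph_adj

theorem sum_fin_ite_intCast_eq {A : Type*} [AddCommMonoid A] {n : ℕ} {h : ℤ → A}
    (h_left : h (-1) = 0) (h_right : h n = 0) {a : ℤ} (ha_left : -1 ≤ a) (ha_right : a ≤ n) :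
    (∑ k : Fin n, if (k : ℤ) = a then h k else 0) = h a := by
  by_cases ha : 0 ≤ a ∧ a < n
  · lift a to ℕ using ha.1
    rw [Finset.sum_eq_single_of_mem (⟨a, by omega⟩ : Fin n) (Finset.mem_univ _)
      fun k _ hk => if_neg (by simpa [Fin.ext_iff] using hk), if_pos rfl]
  · have ha_zero : h a = 0 := by
      obtain rfl | rfl : a = -1 ∨ a = n := by omega
      exacts [h_left, h_right]
    rw [ha_zero]
    exact Finset.sum_eq_zero fun k _ => if_neg (by omega)

theorem adjMatrix_pathGraph_mulVec {A : Type*} [NonAssocSemiring A] {n : ℕ} {h : ℤ → A}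
    (h_left : h (-1) = 0) (h_right : h n = 0) (i : Fin n) :
    ((pathGraph n).adjMatrix A *ᵥ fun k => h k) i = h (i - 1) + h (i + 1) := by
  have h_split (k : Fin n) : (pathGraph n).adjMatrix A i k * h k =
      (if (k : ℤ) = i - 1 then h k else 0) + if (k : ℤ) = i + 1 then h k else 0 := by
    simp only [adjMatrix_apply, ite_mul, one_mul, zero_mul, pathGraph_adj]
    split_ifs <;> first | omega | simp
  calc ∑ k, (pathGraph n).adjMatrix A i k * h k
      = (∑ k : Fin n, if (k : ℤ) = i - 1 then h k else 0) +
          ∑ k : Fin n, if (k : ℤ) = i + 1 then h k else 0 := by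
        simp_rw [h_split, Finset.sum_add_distrib]
    _ = h (i - 1) + h (i + 1) := by
        rw [sum_fin_ite_intCast_eq h_left h_right (by omega) (by omega),
          sum_fin_ite_intCast_eq h_left h_right (by omega) (by omega)]

variable (R : Type*) [CommRing R]

theorem charmatrix_adjMatrix {V : Type*} [Fintype V] [DecidableEq V] (G : SimpleGraph V)
    [DecidableRel G.Adj] :
    (G.adjMatrix R).charmatrix = scalar V (X : R[X]) - G.adjMatrix R[X] := by
  ext1 u v
  simp [charmatrix, adjMatrix_apply, apply_ite C]

/-- The restriction of `pathGreen` to the vertices of the path graph. -/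
noncomputable def pathGreenMatrix (n : ℕ) : Matrix (Fin n) (Fin n) R[X] :=
  of fun i j => pathGreen R n i j

theorem charmatrix_pathGraph_mul_pathGreenMatrix (n : ℕ) :
    ((pathGraph n).adjMatrix R).charmatrix * pathGreenMatrix R n = Chebyshev.S R n • 1 := by
  ext1 i j
  have h_neighbors : ((pathGraph n).adjMatrix R[X] * pathGreenMatrix R n) i j =
      pathGreen R n (i - 1) j + pathGreen R n (i + 1) j :=
    adjMatrix_pathGraph_mulVec (h := fun a => pathGreen R n a j)
      (pathGreen_neg_one_left R (by omega)) (pathGreen_self_left R (by omega)) i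
  rw [charmatrix_adjMatrix, Matrix.sub_mul, Matrix.sub_apply, h_neighbors]
  simpa [pathGreenMatrix, one_apply, Fin.ext_iff] using X_mul_pathGreen_sub_neighbors R n i j

theorem chebyshev_S_smul_adjugate_charmatrix_pathGraph (n : ℕ) :
    Chebyshev.S R n • ((pathGraph n).adjMatrix R).charmatrix.adjugate =
      ((pathGraph n).adjMatrix R).charpoly • pathGreenMatrix R n := by
  set M := ((pathGraph n).adjMatrix R).charmatrix
  calc Chebyshev.S R n • M.adjugate
      = M.adjugate * (M * pathGreenMatrix R n) := by
        rw [charmatrix_pathGraph_mul_pathGreenMatrix, Matrix.mul_smul, Matrix.mul_one]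
    _ = M.det • pathGreenMatrix R n := by
        rw [← Matrix.mul_assoc, adjugate_mul, Matrix.smul_mul, Matrix.one_mul]

theorem chebyshev_S_dvd_charpoly_pathGraph (n : ℕ) :
    Chebyshev.S R n ∣ ((pathGraph n).adjMatrix R).charpoly := by
  cases n with
  | zero => simp
  | succ n =>
    have h_corner : pathGreenMatrix R (n + 1) 0 (Fin.last n) = 1 := by
      simp [pathGreenMatrix, pathGreen_of_le]
    have h_entry := congr_fun₂ (chebyshev_S_smul_adjugate_charmatrix_pathGraph R (n + 1))
      0 (Fin.last n)
    rw [Matrix.smul_apply, Matrix.smul_apply, h_corner, smul_eq_mul, smul_eq_mul, mul_one]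
      at h_entry
    exact Dvd.intro _ h_entry

theorem charpoly_pathGraph (n : ℕ) :
    ((pathGraph n).adjMatrix R).charpoly = Chebyshev.S R n := by
  nontriviality R
  refine eq_of_monic_of_dvd_of_natDegree_le (monic_chebyshev_S R n) (charpoly_monic _)
    (chebyshev_S_dvd_charpoly_pathGraph R n) ?_
  rw [charpoly_natDegree_eq_dim, Fintype.card_fin,
    natDegree_eq_of_degree_eq_some (degree_chebyshev_S R n)]

theorem adjugate_charmatrix_pathGraph (n : ℕ) :
    ((pathGraph n).adjMatrix R).charmatrix.adjugate = pathGreenMatrix R n := by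
  have h_smul := chebyshev_S_smul_adjugate_charmatrix_pathGraph R n
  rw [charpoly_pathGraph] at h_smul
  ext1 i j
  exact (monic_chebyshev_S R n).isRegular.left (congr_fun₂ h_smul i j)

theorem adjugate_charmatrix_path_general (n : ℕ) (i j : Fin n) (hij : i ≤ j) :
    ((pathGraph n).adjMatrix R).charmatrix.adjugate i j =
      ((pathGraph i).adjMatrix R).charpoly * ((pathGraph (n - 1 - j)).adjMatrix R).charpoly := by
  have h_cast : ((n - 1 - j : ℕ) : ℤ) = n - 1 - j := by omega
  rw [adjugate_charmatrix_pathGraph, charpoly_pathGraph, charpoly_pathGraph, h_cast]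
  exact pathGreen_of_le R (mod_cast hij)

end PathGraph

theorem pathMatrix_eq_adjMatrix (n : ℕ) : pathMatrix n = (pathGraph n).adjMatrix ℂ := by
  ext1 i j
  simp only [pathMatrix, of_apply, adjMatrix_apply, pathGraph_adj]

/-- For the path graph `Pₙ` (vertices `1, …, n` in path order, here `0`-indexed) and
`1 ≤ i ≤ j ≤ n` (here `i, j : Fin n`), the `(i, j)` entry of the adjugate of `λI - B` is
`f_{i-1} ⬝ f_{n-j}`, where `fⱼ` is the characteristic polynomial of `Pⱼ` (with `f₀ = 1`). -/
theorem adjugate_charmatrix_path (n : ℕ) (i j : Fin n) (hij : i ≤ j) :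
    (Matrix.charmatrix (pathMatrix n)).adjugate i j =
      (pathMatrix (i : ℕ)).charpoly * (pathMatrix (n - 1 - (j : ℕ))).charpoly := by
  simp only [pathMatrix_eq_adjMatrix]
  exact adjugate_charmatrix_path_general ℂ n i j hij
end

section
/- (Schwenk) Let H be a finite simple graph with adjacency matrix B, and let i and j be vertices of H. Then the (i,j) entry of the adjugate of λI − B equals the sum, over all paths P in H from i to j, of the characteristic polynomial of the induced subgraph H − P obtained by deleting all vertices of P: adj(λI − B)_{i,j} = ∑_{P ∈ 𝒫_{i,j}} f_{H−P}(λ). -/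
open Matrix Polynomial

/-!
Let `M` be a matrix whose off-diagonal entries vanish outside the edges, and let `M'` be `M` with
row `i` replaced by the `i`-th row of the identity. For `i ≠ j`, expanding `adj(M)ᵢⱼ` along row `i`
gives `∑ₖ -Mᵢₖ adj(M')ₖⱼ`. Splitting off the first edge `i → k` of a path from `i` to `j` gives the
same recursion for the sum over paths, provided a path is weighted by the product of the `-Mᵤᵥ` over
its edges: the weight with respect to `M'` kills the paths that return to `i`. The recursion ends
because each step turns one more row into a row of the identity. For `M = λI - B` every path has
weight `1`.
-/

section Determinant

variable {V R : Type*} [Fintype V] [DecidableEq V] [CommRing R]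

theorem det_updateRow_updateRow_swap (M : Matrix V V R) {i j : V} (hij : i ≠ j) (x y : V → R) :
    ((M.updateRow i x).updateRow j y).det = -((M.updateRow i y).updateRow j x).det := by
  have swap_rows : (M.updateRow i x).updateRow j y =
      ((M.updateRow i y).updateRow j x).submatrix (Equiv.swap i j) id := by
    ext a b
    rcases eq_or_ne a i with rfl | hai
    · simp [updateRow_ne hij]
    rcases eq_or_ne a j with rfl | haj
    · simp [updateRow_ne hij]
    · simp [Equiv.swap_apply_of_ne_of_ne hai haj, updateRow_ne hai, updateRow_ne haj]
  rw [swap_rows, det_permute, Equiv.Perm.sign_swap hij]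
  simp

theorem adjugate_apply_eq_zero_of_row_eq_single {M : Matrix V V R} {i j : V} (hij : i ≠ j)
    (hi : M i = Pi.single i 1) : M.adjugate i j = 0 := by
  simpa [mul_apply, hi, Pi.single_apply, one_apply_ne hij] using congr_fun₂ (mul_adjugate M) i j

theorem adjugate_apply_eq_sum_of_ne (M : Matrix V V R) {i j : V} (hij : i ≠ j) :
    M.adjugate i j = ∑ k, -M i k * (M.updateRow i (Pi.single i 1)).adjugate k j := by
  rw [adjugate_apply, det_eq_sum_mul_adjugate_row _ i]
  refine Finset.sum_congr rfl fun k _ => ?_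
  rw [updateRow_ne hij, adjugate_apply, adjugate_apply, updateRow_comm _ hij.symm,
    det_updateRow_updateRow_swap M hij, mul_neg, neg_mul]

/-- The principal minor of `M` on the indices outside `l`. The deleted indices form a list because
they will be the support of a walk. -/
def deletedMinor (M : Matrix V V R) (l : List V) : R :=
  (M.submatrix (Subtype.val : {v // v ∉ l} → V) Subtype.val).det

theorem deletedMinor_nil (M : Matrix V V R) : deletedMinor M [] = M.det :=
  det_submatrix_equiv_self (Equiv.subtypeUnivEquiv fun _ => List.not_mem_nil) M

theorem deletedMinor_updateRow_single (M : Matrix V V R) {i : V} {l : List V} (hi : i ∉ l) :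
    deletedMinor (M.updateRow i (Pi.single i 1)) l = deletedMinor M (i :: l) := by
  let M' : Matrix {v // v ∉ l} {v // v ∉ l} R :=
    (M.updateRow i (Pi.single i 1)).submatrix Subtype.val Subtype.val
  let e : {v // v ∉ i :: l} ≃ {w : {v // v ∉ l} // w ≠ ⟨i, hi⟩} :=
    { toFun v := ⟨⟨v, fun h => v.2 (List.mem_cons_of_mem i h)⟩,
        fun h => v.2 (List.mem_cons.2 (.inl (congr_arg Subtype.val h)))⟩
      invFun w := ⟨w, fun h => (List.mem_cons.1 h).elim (fun h => w.2 (Subtype.ext h)) w.1.2⟩ }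
  have block_ne : (M'.toSquareBlockProp (· ≠ ⟨i, hi⟩)).det = deletedMinor M (i :: l) := by
    rw [← det_submatrix_equiv_self e, deletedMinor]
    congr 1
    ext v w
    have hv : (v : V) ≠ i := fun h => v.2 (List.mem_cons.2 (.inl h))
    exact congr_fun (updateRow_ne hv) (w : V)
  have block_eq : M'.toSquareBlockProp (fun w => ¬w ≠ ⟨i, hi⟩) = 1 := by
    ext ⟨v, hv⟩ ⟨w, hw⟩
    obtain rfl := not_not.1 hv
    obtain rfl := not_not.1 hw
    simp [M', toSquareBlockProp_def]
  have block_zero : ∀ v, ¬v ≠ ⟨i, hi⟩ → ∀ w, w ≠ ⟨i, hi⟩ → M' v w = 0 := by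
    intro v hv w hw
    obtain rfl := not_not.1 hv
    simp [M', Subtype.coe_ne_coe.2 hw]
  calc M'.det = _ := twoBlockTriangular_det M' (· ≠ ⟨i, hi⟩) block_zero
    _ = deletedMinor M (i :: l) := by rw [block_ne, block_eq, det_one, mul_one]

theorem adjugate_apply_self_eq_deletedMinor (M : Matrix V V R) (i : V) :
    M.adjugate i i = deletedMinor M [i] := by
  rw [adjugate_apply, ← deletedMinor_nil, deletedMinor_updateRow_single M List.not_mem_nil]

end Determinant

section Paths

variable {V : Type*} {H : SimpleGraph V} {i j : V}

theorem exists_mem_darts_fst_eq {p : H.Walk i j} {v : V} (hv : v ∈ p.support) (hvj : v ≠ j) :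
    ∃ d ∈ p.darts, d.fst = v := by
  rw [← p.map_fst_darts_append, List.mem_append, List.mem_singleton] at hv
  exact List.mem_map.1 (hv.resolve_right hvj)

theorem sum_path_eq_sum_neighborSet [Fintype V] [DecidableEq V] [DecidableRel H.Adj] {N : Type*}
    [AddCommMonoid N] (hij : i ≠ j) (f : H.Walk i j → N) :
    ∑ P : H.Path i j, f P =
      ∑ k : H.neighborSet i, ∑ Q : H.Path k j with i ∉ Q.1.support,
        f (.cons ((H.mem_neighborSet i k).1 k.2) Q.1) := by
  rw [Finset.sum_sigma']
  symm
  refine Finset.sum_bij (fun x hx => ⟨.cons x.1.2 x.2.1, x.2.2.cons (by simpa using hx)⟩)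
    (fun _ _ => Finset.mem_univ _) ?_ ?_ (fun _ _ => rfl)
  · rintro ⟨⟨k, hk⟩, Q, hQ⟩ _ ⟨⟨k', hk'⟩, Q', hQ'⟩ _ h
    obtain ⟨rfl, h⟩ := SimpleGraph.Walk.cons.inj (congr_arg Subtype.val h)
    obtain rfl := eq_of_heq h
    rfl
  · rintro ⟨P, hP⟩ _
    cases P with
    | nil => exact absurd rfl hij
    | cons h Q =>
      rw [SimpleGraph.Walk.cons_isPath_iff] at hP
      exact ⟨⟨⟨_, h⟩, Q, hP.1⟩, by simpa using hP.2, rfl⟩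

variable {R : Type*} [CommRing R]

/-- The weight of a walk: the product of the negated entries of `M` along its steps. The sign makes
the weight with respect to `λI - A` the product of the entries of `A`. -/
def walkWeight (M : Matrix V V R) (p : H.Walk i j) : R :=
  (p.darts.map fun d => -M d.fst d.snd).prod

theorem walkWeight_cons (M : Matrix V V R) {k : V} (h : H.Adj i k) (p : H.Walk k j) :
    walkWeight M (.cons h p) = -M i k * walkWeight M p := by
  simp [walkWeight]

theorem walkWeight_eq_zero_of_row_eq_single [DecidableEq V] {M : Matrix V V R} {p : H.Walk i j}
    {v : V} (hv : v ∈ p.support) (hvj : v ≠ j) (hrow : M v = Pi.single v 1) :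
    walkWeight M p = 0 := by
  obtain ⟨d, hd, rfl⟩ := exists_mem_darts_fst_eq hv hvj
  exact List.prod_eq_zero (List.mem_map.2 ⟨d, hd, by simp [hrow, d.adj.ne']⟩)

theorem walkWeight_updateRow_of_notMem_support [DecidableEq V] (M : Matrix V V R)
    {p : H.Walk i j} {v : V} (hv : v ∉ p.support) (x : V → R) :
    walkWeight (M.updateRow v x) p = walkWeight M p := by
  refine congr_arg List.prod (List.map_congr_left fun d hd => ?_)
  have hdv : d.fst ≠ v := fun h => hv (h ▸ p.dart_fst_mem_support_of_mem_darts hd)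
  rw [updateRow_ne hdv]

theorem walkWeight_charmatrix_adjMatrix [Fintype V] [DecidableEq V] [DecidableRel H.Adj]
    (p : H.Walk i j) : walkWeight (charmatrix (H.adjMatrix R)) p = 1 := by
  refine List.prod_eq_one fun x hx => ?_
  obtain ⟨d, -, rfl⟩ := List.mem_map.1 hx
  simp [d.adj]

end Paths

section PathExpansion

variable {V R : Type*} [Fintype V] [DecidableEq V] [CommRing R] (H : SimpleGraph V)
  [DecidableRel H.Adj]

/-- The sum over all paths `P` from `i` to `j` of the weight of `P` times the principal minor of `M`
off `P`: the combinatorial side of Schwenk's formula, for an arbitrary matrix `M`. -/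
def pathExpansion (M : Matrix V V R) (i j : V) : R :=
  ∑ P : H.Path i j, walkWeight M (P : H.Walk i j) * deletedMinor M (P : H.Walk i j).support

theorem pathExpansion_self (M : Matrix V V R) (i : V) :
    pathExpansion H M i i = deletedMinor M [i] := by
  have eq_nil (P : H.Path i i) : P = SimpleGraph.Path.nil := P.loop_eq
  rw [pathExpansion, Fintype.sum_eq_single SimpleGraph.Path.nil fun P hP => absurd (eq_nil P) hP]
  simp [walkWeight]

theorem pathExpansion_eq_zero_of_row_eq_single {M : Matrix V V R} {i j : V} (hij : i ≠ j)
    (hi : M i = Pi.single i 1) : pathExpansion H M i j = 0 :=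
  Finset.sum_eq_zero fun P _ => by
    rw [walkWeight_eq_zero_of_row_eq_single P.1.start_mem_support hij hi, zero_mul]

theorem pathExpansion_updateRow_single (M : Matrix V V R) {i j : V} (hij : i ≠ j) (k : V) :
    pathExpansion H (M.updateRow i (Pi.single i 1)) k j =
      ∑ Q : H.Path k j with i ∉ Q.1.support,
        walkWeight M Q.1 * deletedMinor M (i :: Q.1.support) := by
  rw [pathExpansion, Finset.sum_filter]
  refine Finset.sum_congr rfl fun Q _ => ?_
  split_ifs with hi
  · rw [walkWeight_eq_zero_of_row_eq_single hi hij updateRow_self, zero_mul]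
  · rw [walkWeight_updateRow_of_notMem_support M hi, deletedMinor_updateRow_single M hi]

theorem pathExpansion_eq_sum_neighborSet (M : Matrix V V R) {i j : V} (hij : i ≠ j) :
    pathExpansion H M i j = ∑ k : H.neighborSet i,
      -M i k * pathExpansion H (M.updateRow i (Pi.single i 1)) k j := by
  rw [pathExpansion, 
    sum_path_eq_sum_neighborSet hij fun p => walkWeight M p * deletedMinor M p.support]
  simp only [walkWeight_cons, SimpleGraph.Walk.support_cons, pathExpansion_updateRow_single H M hij,
    Finset.mul_sum, mul_assoc]

variable {H}

theorem adjugate_apply_eq_sum_neighborSet {M : Matrix V V R}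
    (hM : ∀ u v, u ≠ v → ¬H.Adj u v → M u v = 0) {i j : V} (hij : i ≠ j) :
    M.adjugate i j = ∑ k : H.neighborSet i,
      -M i k * (M.updateRow i (Pi.single i 1)).adjugate k j := by
  rw [adjugate_apply_eq_sum_of_ne M hij]
  refine Finset.sum_congr_set (H.neighborSet i) _ _ (fun _ _ => rfl) fun k hk => ?_
  rcases eq_or_ne i k with rfl | hik
  · rw [adjugate_apply_eq_zero_of_row_eq_single hij updateRow_self, mul_zero]
  · rw [hM i k hik hk, neg_zero, zero_mul]

theorem adjugate_apply_eq_pathExpansion {M : Matrix V V R}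
    (hM : ∀ u v, u ≠ v → ¬H.Adj u v → M u v = 0) (i j : V) :
    M.adjugate i j = pathExpansion H M i j := by
  suffices of_rows_eq_single : ∀ s : Finset V, (∀ v ∉ s, M v = Pi.single v 1) →
      M.adjugate i j = pathExpansion H M i j from of_rows_eq_single Finset.univ (by simp)
  intro s hs
  induction s using Finset.strongInduction generalizing M i with
  | H s ih =>
  rcases eq_or_ne i j with rfl | hij
  · rw [adjugate_apply_self_eq_deletedMinor, pathExpansion_self]
  by_cases hi : i ∈ s
  · have hM' : ∀ u v, u ≠ v → ¬H.Adj u v → M.updateRow i (Pi.single i 1) u v = 0 := by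
      intro u v huv hadj
      rcases eq_or_ne u i with rfl | hui
      · simp [huv.symm]
      · rw [updateRow_ne hui, hM u v huv hadj]
    have hs' : ∀ v ∉ s.erase i, M.updateRow i (Pi.single i 1) v = Pi.single v 1 := by
      intro v hv
      rcases eq_or_ne v i with rfl | hvi
      · exact updateRow_self
      · rw [updateRow_ne hvi, hs v fun h => hv (Finset.mem_erase.2 ⟨hvi, h⟩)]
    rw [adjugate_apply_eq_sum_neighborSet hM hij, pathExpansion_eq_sum_neighborSet H M hij]
    exact Finset.sum_congr rfl fun k _ => by rw [ih _ (Finset.erase_ssubset hi) hM' k hs']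
  · rw [adjugate_apply_eq_zero_of_row_eq_single hij (hs i hi),
      pathExpansion_eq_zero_of_row_eq_single H hij (hs i hi)]

end PathExpansion

theorem charmatrix_submatrix_of_injective {m n R : Type*} [Fintype m] [DecidableEq m] [Fintype n]
    [DecidableEq n] [CommRing R] (A : Matrix n n R) {f : m → n} (hf : f.Injective) :
    charmatrix (A.submatrix f f) = (charmatrix A).submatrix f f := by
  ext1 a b
  simp [charmatrix_apply, diagonal_apply, hf.eq_iff]

theorem schwenk_adjugate_general {V R : Type*} [Fintype V] [DecidableEq V] [CommRing R]
    (H : SimpleGraph V) [DecidableRel H.Adj] (i j : V) :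
    (charmatrix (H.adjMatrix R)).adjugate i j =
      ∑ P : H.Path i j,
        ((H.adjMatrix R).submatrix
          (fun v : {v : V // v ∉ (P : H.Walk i j).support} => (v : V))
          (fun v : {v : V // v ∉ (P : H.Walk i j).support} => (v : V))).charpoly := by
  have off_edges : ∀ u v, u ≠ v → ¬H.Adj u v → charmatrix (H.adjMatrix R) u v = 0 :=
    fun u v huv hadj => by simp [charmatrix_apply_ne _ _ _ huv, hadj]
  rw [adjugate_apply_eq_pathExpansion off_edges, pathExpansion]
  refine Finset.sum_congr rfl fun P _ => ?_
  rw [walkWeight_charmatrix_adjMatrix, one_mul, deletedMinor, charpoly,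
    charmatrix_submatrix_of_injective _ Subtype.val_injective]

/-- **Schwenk's theorem**: for vertices `i, j` of a graph `H` with adjacency matrix `B`,
the `(i, j)` entry of the adjugate of `λI - B` is the sum, over all paths `P` from `i` to `j`
in `H`, of the characteristic polynomial of the induced subgraph `H - P` obtained by deleting
the vertices of `P`. -/
theorem schwenk_adjugate {V : Type*} [Fintype V] [DecidableEq V] (H : SimpleGraph V)
    [DecidableRel H.Adj] (i j : V) :
    (Matrix.charmatrix (H.adjMatrix ℂ)).adjugate i j =
      ∑ P : H.Path i j,
        ((H.adjMatrix ℂ).submatrix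
          (fun v : {v : V // v ∉ (P : H.Walk i j).support} => (v : V))
          (fun v : {v : V // v ∉ (P : H.Walk i j).support} => (v : V))).charpoly :=
  schwenk_adjugate_general H i j
end
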